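/- arXiv:2104.12251 — 2 statements merged into one kernel-verified Lean document; each statement's English description precedes it below -/
import Mathlib

section
/- Let n ≥ 1, μ > 0 and λ ∈ ℝ with ν := λ + 2μ > 0. Then there exists a constant C = C(n,μ,λ) such that every Schwartz vector field v : ℝⁿ → ℝⁿ satisfies ‖∇v‖_{L^∞} ≤ C ‖v‖_{L^∞}^{1/2} ‖𝓛v‖_{L^∞}^{1/2}. -/
open MeasureTheory
open scoped ENNReal NNReal

noncomputable section

/-- Euclidean space `ℝⁿ`. -/
abbrev En (n : ℕ) := EuclideanSpace ℝ (Fin n)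

/-- Partial derivative `∂ᵢ f` of a scalar function on `ℝⁿ`. -/
def pdv {n : ℕ} (i : Fin n) (f : En n → ℝ) (x : En n) : ℝ :=
  fderiv ℝ f x (EuclideanSpace.single i 1)

/-- The Lamé operator `𝓛u = μΔu + (λ+μ)∇(div u)` acting on vector fields. -/
def lame {n : ℕ} (μ lam : ℝ) (u : En n → En n) (x : En n) : En n :=
  (EuclideanSpace.equiv (Fin n) ℝ).symm fun i =>
    μ * (∑ j, pdv j (fun y => pdv j (fun z => u z i) y) x)
      + (lam + μ) * pdv i (fun y => ∑ j, pdv j (fun z => u z j) y) x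

open LineDeriv
open scoped SchwartzMap

section Gaussian

variable {H : Type*} [NormedAddCommGroup H] [InnerProductSpace ℝ H]

theorem exists_one_add_pow_mul_exp_neg_sq_le (N : ℕ) :
    ∃ C : ℝ, ∀ r : ℝ, 0 ≤ r → (1 + r) ^ N * Real.exp (-(r ^ 2 / 2)) ≤ C := by
  refine ⟨(N.factorial : ℝ) * Real.exp (3 / 2), fun r hr => ?_⟩
  have h1 : (1 + r) ^ N ≤ (N.factorial : ℝ) * Real.exp (1 + r) := by
    have := Real.pow_div_factorial_le_exp (1 + r) (by linarith) N
    rwa [div_le_iff₀ (by positivity), mul_comm] at this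
  calc (1 + r) ^ N * Real.exp (-(r ^ 2 / 2))
      ≤ ((N.factorial : ℝ) * Real.exp (1 + r)) * Real.exp (-(r ^ 2 / 2)) := by gcongr
    _ = (N.factorial : ℝ) * Real.exp (1 + r + -(r ^ 2 / 2)) := by rw [Real.exp_add (1 + r)]; ring
    _ ≤ (N.factorial : ℝ) * Real.exp (3 / 2) := by
        gcongr
        nlinarith [sq_nonneg (r - 1)]

theorem norm_iteratedFDeriv_exp_neg (i : ℕ) (u : ℝ) :
    ‖iteratedFDeriv ℝ i (fun u : ℝ => Real.exp (-u)) u‖ = Real.exp (-u) := by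
  rw [norm_iteratedFDeriv_eq_norm_iteratedDeriv]
  have : (fun u : ℝ => Real.exp (-u)) = fun u => Real.exp ((-1) * u) := by
    ext u; simp
  rw [this, iteratedDeriv_exp_const_mul]
  simp

/-- The Gaussian `exp (-‖z‖² / 2)` as a Schwartz function. -/
def gaussianSchwartz (H : Type*) [NormedAddCommGroup H] [InnerProductSpace ℝ H] : 𝓢(H, ℝ) where
  toFun z := Real.exp (-(‖z‖ ^ 2 / 2))
  smooth' := ((contDiff_norm_sq ℝ).div_const 2).neg.exp
  decay' k m := by
    have hq : (fun z : H => ‖z‖ ^ 2 / 2).HasTemperateGrowth := by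
      simp only [div_eq_mul_inv]
      exact (Function.hasTemperateGrowth_norm_sq H).mul (.const _)
    obtain ⟨p, C, hC0, hC⟩ := hq.norm_iteratedFDeriv_le_uniform m
    obtain ⟨B, hB⟩ := exists_one_add_pow_mul_exp_neg_sq_le (k + p * m)
    refine ⟨(m.factorial : ℝ) * (C + 1) ^ m * B, fun x => ?_⟩
    have hd := norm_iteratedFDeriv_comp_le (𝕜 := ℝ) (N := m) (n := m)
      (g := fun u : ℝ => Real.exp (-u)) (f := fun z : H => ‖z‖ ^ 2 / 2)
      (by fun_prop) ((contDiff_norm_sq ℝ).div_const 2) le_rfl x (C := Real.exp (-(‖x‖ ^ 2 / 2)))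
      (D := (C + 1) * (1 + ‖x‖) ^ p)
      (fun i _ => (norm_iteratedFDeriv_exp_neg i _).le) (fun i hi him => by
        have h1 : 1 ≤ (C + 1) * (1 + ‖x‖) ^ p :=
          one_le_mul_of_one_le_of_one_le (by linarith)
            (one_le_pow₀ (by linarith [norm_nonneg x]))
        calc _ ≤ C * (1 + ‖x‖) ^ p := hC i him x
          _ ≤ (C + 1) * (1 + ‖x‖) ^ p := by gcongr; linarith
          _ ≤ _ := le_self_pow₀ h1 (by omega))
    calc _ ≤ ‖x‖ ^ k * ((m.factorial : ℝ) * Real.exp (-(‖x‖ ^ 2 / 2)) *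
            ((C + 1) * (1 + ‖x‖) ^ p) ^ m) := by
          gcongr; exact hd
      _ ≤ (1 + ‖x‖) ^ k * ((m.factorial : ℝ) * Real.exp (-(‖x‖ ^ 2 / 2)) *
            ((C + 1) * (1 + ‖x‖) ^ p) ^ m) := by
          gcongr; linarith
      _ = (m.factorial : ℝ) * (C + 1) ^ m *
            ((1 + ‖x‖) ^ (k + p * m) * Real.exp (-(‖x‖ ^ 2 / 2))) := by
          rw [mul_pow, ← pow_mul, pow_add]; ring
      _ ≤ (m.factorial : ℝ) * (C + 1) ^ m * B := by
          gcongr; exact hB _ (norm_nonneg x)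

theorem gaussianSchwartz_apply (z : H) :
    gaussianSchwartz H z = Real.exp (-(‖z‖ ^ 2 / 2)) := rfl

theorem fderiv_gaussianSchwartz (z w : H) :
    fderiv ℝ (gaussianSchwartz H) z w = -(inner ℝ z w * gaussianSchwartz H z) := by
  have hfun : ⇑(gaussianSchwartz H) = fun z => Real.exp (-((1 / 2 : ℝ) • ‖z‖ ^ 2)) := by
    ext z
    rw [gaussianSchwartz_apply, smul_eq_mul, one_div_mul_eq_div]
  have h : HasFDerivAt (fun z : H => Real.exp (-((1 / 2 : ℝ) • ‖z‖ ^ 2))) _ z :=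
    (((hasStrictFDerivAt_norm_sq z).hasFDerivAt.const_smul (1 / 2 : ℝ)).neg).exp
  rw [hfun, h.fderiv]
  simp
  ring

end Gaussian

section Averages

variable {n : ℕ}

/-- The partial derivative `∂ᵢ` as a linear operator on Schwartz functions. -/
def schwartzPd (i : Fin n) : 𝓢(En n, ℝ) →ₗ[ℝ] 𝓢(En n, ℝ) :=
  (lineDerivOpCLM ℝ 𝓢(En n, ℝ) (EuclideanSpace.single i (1 : ℝ))).toLinearMap

theorem schwartzPd_apply (i : Fin n) (g : 𝓢(En n, ℝ)) (x : En n) :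
    schwartzPd i g x = fderiv ℝ g x (EuclideanSpace.single i 1) := rfl

theorem schwartzPd_comm (i j : Fin n) (g : 𝓢(En n, ℝ)) :
    schwartzPd i (schwartzPd j g) = schwartzPd j (schwartzPd i g) := by
  have key : ∀ (a b : Fin n) (x : En n), schwartzPd a (schwartzPd b g) x =
      fderiv ℝ (fderiv ℝ g) x (EuclideanSpace.single a 1) (EuclideanSpace.single b 1) := by
    intro a b x
    have hd : DifferentiableAt ℝ (fderiv ℝ g) x :=
      (((g.smooth 2).fderiv_right (m := 1) (by norm_num)).differentiable (by norm_num)) x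
    change fderiv ℝ (fun y => fderiv ℝ g y (EuclideanSpace.single b 1)) x _ = _
    rw [fderiv_clm_apply hd (by fun_prop)]
    simp
  ext x
  rw [key, key]
  have hs : IsSymmSndFDerivAt ℝ g x :=
    (g.contDiffAt 2).isSymmSndFDerivAt (by simp)
  exact hs _ _

/-- The weighted average `∫ g (x + s z) φ(z) dz` of `g` around `x` at scale `s`. -/
def dilatedAverage (φ : 𝓢(En n, ℝ)) (s : ℝ) (g : 𝓢(En n, ℝ)) (x : En n) : ℝ :=
  ∫ z, g (x + s • z) * φ z

theorem integrable_dilated_mul (φ : 𝓢(En n, ℝ)) (s : ℝ) (g : 𝓢(En n, ℝ)) (x : En n) :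
    Integrable (fun z => g (x + s • z) * φ z) := by
  refine Integrable.bdd_mul (c := SchwartzMap.seminorm ℝ 0 0 g) φ.integrable ?_ ?_
  · exact (by fun_prop : Continuous fun z => g (x + s • z)).aestronglyMeasurable
  · exact .of_forall fun z => SchwartzMap.norm_le_seminorm ℝ g _

theorem dilatedAverage_zero (φ g : 𝓢(En n, ℝ)) (x : En n) :
    dilatedAverage φ 0 g x = g x * ∫ z, φ z := by
  simp [dilatedAverage, integral_const_mul]

theorem dilatedAverage_sum {ι : Type*} (t : Finset ι) (φ : 𝓢(En n, ℝ)) (s : ℝ)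
    (g : ι → 𝓢(En n, ℝ)) (x : En n) :
    dilatedAverage φ s (∑ i ∈ t, g i) x = ∑ i ∈ t, dilatedAverage φ s (g i) x := by
  simp only [dilatedAverage]
  rw [← integral_finsetSum _ fun i _ => integrable_dilated_mul φ s (g i) x]
  simp [Finset.sum_mul]

theorem dilatedAverage_smul (c : ℝ) (φ : 𝓢(En n, ℝ)) (s : ℝ) (g : 𝓢(En n, ℝ)) (x : En n) :
    dilatedAverage φ s (c • g) x = c * dilatedAverage φ s g x := by
  simp [dilatedAverage, mul_assoc, integral_const_mul]

theorem dilatedAverage_sub (φ : 𝓢(En n, ℝ)) (s : ℝ) (g h : 𝓢(En n, ℝ)) (x : En n) :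
    dilatedAverage φ s (g - h) x = dilatedAverage φ s g x - dilatedAverage φ s h x := by
  simp only [dilatedAverage]
  rw [← integral_sub (integrable_dilated_mul φ s g x) (integrable_dilated_mul φ s h x)]
  simp [sub_mul]

theorem abs_dilatedAverage_le (φ : 𝓢(En n, ℝ)) (s : ℝ) (g : 𝓢(En n, ℝ)) (x : En n) {M : ℝ}
    (hM : ∀ y, |g y| ≤ M) : |dilatedAverage φ s g x| ≤ M * ∫ z, |φ z| := by
  have hφ : Integrable φ volume := φ.integrable
  rw [dilatedAverage, ← integral_const_mul, ← Real.norm_eq_abs]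
  refine norm_integral_le_of_norm_le (hφ.norm.const_mul M) (.of_forall fun z => ?_)
  rw [Real.norm_eq_abs, abs_mul]
  gcongr
  exact hM _

theorem fderiv_dilated (g : 𝓢(En n, ℝ)) (x : En n) (s : ℝ) (z w : En n) :
    fderiv ℝ (fun z => g (x + s • z)) z w = s * fderiv ℝ g (x + s • z) w := by
  have h : HasFDerivAt (fun z : En n => x + s • z) (s • ContinuousLinearMap.id ℝ (En n)) z :=
    ((hasFDerivAt_id z).const_smul s).const_add x
  have := (g.hasFDerivAt (x + s • z)).comp z h
  rw [show (fun z => g (x + s • z)) = g ∘ fun z => x + s • z from rfl, this.fderiv]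
  simp

theorem mul_dilatedAverage_schwartzPd (φ : 𝓢(En n, ℝ)) (s : ℝ) (g : 𝓢(En n, ℝ)) (x : En n)
    (i : Fin n) :
    s * dilatedAverage φ s (schwartzPd i g) x = -dilatedAverage (schwartzPd i φ) s g x := by
  have hg : Differentiable ℝ fun z => g (x + s • z) :=
    g.differentiable.comp (by fun_prop : Differentiable ℝ fun z : En n => x + s • z)
  have := integral_mul_fderiv_eq_neg_fderiv_mul_of_integrable (μ := (volume : Measure (En n)))
    (f := fun z => g (x + s • z)) (g := φ) (v := EuclideanSpace.single i (1 : ℝ))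
    (by
      simp only [fderiv_dilated, mul_assoc]
      exact (integrable_dilated_mul φ s (schwartzPd i g) x).const_mul s)
    (integrable_dilated_mul (schwartzPd i φ) s g x) (integrable_dilated_mul φ s g x)
    (fun z _ => hg z) (fun z _ => φ.differentiable z)
  simp only [fderiv_dilated, mul_assoc, integral_const_mul] at this
  simp only [dilatedAverage, schwartzPd_apply]
  linarith

theorem pow_three_mul_dilatedAverage (φ : 𝓢(En n, ℝ)) (s : ℝ) (g : 𝓢(En n, ℝ)) (x : En n)
    (i j k : Fin n) :
    s ^ 3 * dilatedAverage φ s (schwartzPd i (schwartzPd j (schwartzPd k g))) x =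
      -dilatedAverage (schwartzPd k (schwartzPd j (schwartzPd i φ))) s g x := by
  have h1 := mul_dilatedAverage_schwartzPd φ s (schwartzPd j (schwartzPd k g)) x i
  have h2 := mul_dilatedAverage_schwartzPd (schwartzPd i φ) s (schwartzPd k g) x j
  have h3 := mul_dilatedAverage_schwartzPd (schwartzPd j (schwartzPd i φ)) s g x k
  linear_combination s ^ 2 * h1 - s * h2 + h3

/-- The Laplacian on Schwartz functions. -/
def schwartzLap : 𝓢(En n, ℝ) →ₗ[ℝ] 𝓢(En n, ℝ) := ∑ i, schwartzPd i ∘ₗ schwartzPd i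

theorem schwartzLap_apply (g : 𝓢(En n, ℝ)) :
    schwartzLap g = ∑ i, schwartzPd i (schwartzPd i g) := by
  simp [schwartzLap]

theorem hasDerivAt_dilatedAverage (φ : 𝓢(En n, ℝ)) (s : ℝ) (g : 𝓢(En n, ℝ)) (x : En n) :
    HasDerivAt (fun s => dilatedAverage φ s g x)
      (∫ z, fderiv ℝ g (x + s • z) z * φ z) s := by
  set G := SchwartzMap.fderivCLM ℝ (En n) ℝ g with hG
  have hGc : Continuous (fderiv ℝ g) := G.continuous
  refine (hasDerivAt_integral_of_dominated_loc_of_deriv_le (s := Set.univ)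
    (bound := fun z => SchwartzMap.seminorm ℝ 0 0 G * (‖z‖ ^ 1 * ‖φ z‖))
    (F := fun s z => g (x + s • z) * φ z)
    (F' := fun s z => fderiv ℝ g (x + s • z) z * φ z)
    Filter.univ_mem ?_ (integrable_dilated_mul φ s g x) ?_ ?_ ?_ ?_).2
  · exact .of_forall fun s => (integrable_dilated_mul φ s g x).aestronglyMeasurable
  · have : Continuous fun z => fderiv ℝ g (x + s • z) z :=
      (hGc.comp (by fun_prop)).clm_apply continuous_id
    exact (this.mul φ.continuous).aestronglyMeasurable
  · refine .of_forall fun z t _ => ?_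
    rw [norm_mul, pow_one, ← mul_assoc]
    gcongr
    refine (ContinuousLinearMap.le_opNorm _ _).trans ?_
    gcongr
    exact SchwartzMap.norm_le_seminorm ℝ G (x + t • z)
  · exact (φ.integrable_pow_mul volume 1).const_mul _
  · refine .of_forall fun z t _ => ?_
    have h : HasDerivAt (fun t : ℝ => x + t • z) z t := by
      simpa using ((hasDerivAt_id t).smul_const z).const_add x
    exact ((g.hasFDerivAt (x + t • z)).comp_hasDerivAt t h).mul_const (φ z)

theorem hasDerivAt_gaussianAverage (s : ℝ) (g : 𝓢(En n, ℝ)) (x : En n) :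
    HasDerivAt (fun s => dilatedAverage (gaussianSchwartz (En n)) s g x)
      (s * dilatedAverage (gaussianSchwartz (En n)) s (schwartzLap g) x) s := by
  convert hasDerivAt_dilatedAverage (gaussianSchwartz (En n)) s g x using 1
  have hz : ∀ (L : En n →L[ℝ] ℝ) (z : En n),
      L z = ∑ i, z i * L (EuclideanSpace.single i 1) := by
    intro L z
    conv_lhs => rw [← (EuclideanSpace.basisFun (Fin n) ℝ).sum_repr z]
    simp
  have hγ : ∀ (i : Fin n) (z : En n), schwartzPd i (gaussianSchwartz (En n)) z =
      -(z i * gaussianSchwartz (En n) z) := by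
    intro i z
    rw [schwartzPd_apply, fderiv_gaussianSchwartz]
    simp [EuclideanSpace.inner_single_right]
  have hint : ∀ z, fderiv ℝ g (x + s • z) z * gaussianSchwartz (En n) z =
      -∑ i, schwartzPd i g (x + s • z) * schwartzPd i (gaussianSchwartz (En n)) z := by
    intro z
    rw [hz, Finset.sum_mul, ← Finset.sum_neg_distrib]
    refine Finset.sum_congr rfl fun i _ => ?_
    rw [hγ, schwartzPd_apply]
    ring
  simp only [hint]
  rw [integral_neg,
    integral_finsetSum _ fun i _ => integrable_dilated_mul _ s (schwartzPd i g) x,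
    schwartzLap_apply, dilatedAverage_sum, Finset.mul_sum, ← Finset.sum_neg_distrib]
  refine Finset.sum_congr rfl fun i _ => ?_
  rw [mul_dilatedAverage_schwartzPd]
  rfl

theorem hasDerivAt_gaussianAverage_sub (s : ℝ) (g : 𝓢(En n, ℝ)) (x : En n) :
    HasDerivAt (fun s => dilatedAverage (gaussianSchwartz (En n)) s g x -
        s ^ 2 / 2 * dilatedAverage (gaussianSchwartz (En n)) s (schwartzLap g) x)
      (-(s ^ 3 / 2 *
        dilatedAverage (gaussianSchwartz (En n)) s (schwartzLap (schwartzLap g)) x)) s := by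
  have h := (hasDerivAt_gaussianAverage s g x).sub
    (((hasDerivAt_pow 2 s).div_const 2).mul (hasDerivAt_gaussianAverage s (schwartzLap g) x))
  refine h.congr_deriv ?_
  push_cast
  ring

theorem integral_gaussianSchwartz_pos : 0 < ∫ z, gaussianSchwartz (En n) z := by
  rw [MeasureTheory.integral_pos_iff_support_of_nonneg
    (fun z => show 0 ≤ gaussianSchwartz (En n) z from (Real.exp_pos _).le)
    (gaussianSchwartz (En n)).integrable]
  have : Function.support (gaussianSchwartz (En n)) = Set.univ := by
    ext z
    simp [gaussianSchwartz_apply]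
  rw [this]
  exact isOpen_univ.measure_pos _ Set.univ_nonempty

/-- The sum of the `L¹` norms of all first and third partial derivatives of the Gaussian. -/
def gaussianDerivMass (n : ℕ) : ℝ :=
  (∑ i, ∫ z, |schwartzPd i (gaussianSchwartz (En n)) z|) +
    ∑ p : Fin n × Fin n × Fin n,
      ∫ z, |schwartzPd p.1 (schwartzPd p.2.1 (schwartzPd p.2.2 (gaussianSchwartz (En n)))) z|

theorem gaussianDerivMass_nonneg : 0 ≤ gaussianDerivMass n :=
  add_nonneg (Finset.sum_nonneg fun _ _ => integral_nonneg fun _ => abs_nonneg _)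
    (Finset.sum_nonneg fun _ _ => integral_nonneg fun _ => abs_nonneg _)

theorem integral_abs_schwartzPd_gaussian_le (i : Fin n) :
    ∫ z, |schwartzPd i (gaussianSchwartz (En n)) z| ≤ gaussianDerivMass n :=
  (Finset.single_le_sum (f := fun i : Fin n => ∫ z, |schwartzPd i (gaussianSchwartz (En n)) z|)
    (fun _ _ => integral_nonneg fun _ => abs_nonneg _) (Finset.mem_univ i)).trans
    (le_add_of_nonneg_right
      (Finset.sum_nonneg fun _ _ => integral_nonneg fun _ => abs_nonneg _))

theorem integral_abs_schwartzPd_three_gaussian_le (i j k : Fin n) :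
    ∫ z, |schwartzPd i (schwartzPd j (schwartzPd k (gaussianSchwartz (En n)))) z| ≤
      gaussianDerivMass n :=
  (Finset.single_le_sum (f := fun p : Fin n × Fin n × Fin n =>
      ∫ z, |schwartzPd p.1 (schwartzPd p.2.1 (schwartzPd p.2.2 (gaussianSchwartz (En n)))) z|)
    (fun _ _ => integral_nonneg fun _ => abs_nonneg _) (Finset.mem_univ (i, j, k))).trans
    (le_add_of_nonneg_left
      (Finset.sum_nonneg fun _ _ => integral_nonneg fun _ => abs_nonneg _))

theorem abs_mul_gaussianAverage_schwartzPd_le (s : ℝ) (g : 𝓢(En n, ℝ)) (x : En n) (i : Fin n)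
    {M : ℝ} (hM0 : 0 ≤ M) (hM : ∀ y, |g y| ≤ M) :
    |s * dilatedAverage (gaussianSchwartz (En n)) s (schwartzPd i g) x| ≤
      M * gaussianDerivMass n := by
  rw [mul_dilatedAverage_schwartzPd, abs_neg]
  refine (abs_dilatedAverage_le _ s g x hM).trans ?_
  gcongr
  exact integral_abs_schwartzPd_gaussian_le i

theorem abs_pow_three_mul_gaussianAverage_le (s : ℝ) (g : 𝓢(En n, ℝ)) (x : En n)
    (i j k : Fin n) {M : ℝ} (hM0 : 0 ≤ M) (hM : ∀ y, |g y| ≤ M) :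
    |s ^ 3 * dilatedAverage (gaussianSchwartz (En n)) s
        (schwartzPd i (schwartzPd j (schwartzPd k g))) x| ≤ M * gaussianDerivMass n := by
  rw [pow_three_mul_dilatedAverage, abs_neg]
  refine (abs_dilatedAverage_le _ s g x hM).trans ?_
  gcongr
  exact integral_abs_schwartzPd_three_gaussian_le k j i

theorem schwartzLap_schwartzPd (i : Fin n) (g : 𝓢(En n, ℝ)) :
    schwartzLap (schwartzPd i g) = schwartzPd i (schwartzLap g) := by
  simp only [schwartzLap_apply, map_sum]
  refine Finset.sum_congr rfl fun j _ => ?_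
  rw [schwartzPd_comm j i g, schwartzPd_comm j i]

/-- The Lamé operator on tuples of Schwartz functions. -/
def schwartzLame (μ lam : ℝ) (u : Fin n → 𝓢(En n, ℝ)) (i : Fin n) : 𝓢(En n, ℝ) :=
  μ • schwartzLap (u i) + (lam + μ) • schwartzPd i (∑ j, schwartzPd j (u j))

theorem sum_schwartzPd_schwartzLame (μ lam : ℝ) (u : Fin n → 𝓢(En n, ℝ)) :
    ∑ j, schwartzPd j (schwartzLame μ lam u j) =
      (lam + 2 * μ) • schwartzLap (∑ j, schwartzPd j (u j)) := by
  simp only [schwartzLame, map_add, map_smul, Finset.sum_add_distrib, ← Finset.smul_sum,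
    ← schwartzLap_schwartzPd, ← map_sum]
  rw [← schwartzLap_apply, ← add_smul]
  congr 1
  ring

theorem smul_schwartzLap_schwartzLap (μ lam : ℝ) (u : Fin n → 𝓢(En n, ℝ)) (i : Fin n) :
    (μ * (lam + 2 * μ)) • schwartzLap (schwartzLap (u i)) =
      (lam + 2 * μ) • schwartzLap (schwartzLame μ lam u i) -
        (lam + μ) • schwartzPd i (∑ j, schwartzPd j (schwartzLame μ lam u j)) := by
  rw [sum_schwartzPd_schwartzLame, schwartzLame]
  simp only [map_add, map_smul, schwartzLap_schwartzPd]
  module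

theorem abs_gaussianAverage_bilaplacian_le {μ lam : ℝ} (hμ : 0 < μ) (hν : 0 < lam + 2 * μ)
    (u : Fin n → 𝓢(En n, ℝ)) {F : ℝ} (hF0 : 0 ≤ F) (hF : ∀ i y, |schwartzLame μ lam u i y| ≤ F)
    (i k : Fin n) (s : ℝ) (x : En n) :
    |s ^ 3 * dilatedAverage (gaussianSchwartz (En n)) s
        (schwartzLap (schwartzLap (schwartzPd k (u i)))) x| ≤
      (lam + 2 * μ + |lam + μ|) * (n * gaussianDerivMass n) / (μ * (lam + 2 * μ)) * F := by
  set f := schwartzLame μ lam u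
  have hμν : 0 < μ * (lam + 2 * μ) := mul_pos hμ hν
  have hid : (μ * (lam + 2 * μ)) • schwartzLap (schwartzLap (schwartzPd k (u i))) =
      (lam + 2 * μ) • ∑ j, schwartzPd k (schwartzPd j (schwartzPd j (f i))) -
        (lam + μ) • ∑ j, schwartzPd k (schwartzPd i (schwartzPd j (f j))) := by
    have h := congrArg (schwartzPd k) (smul_schwartzLap_schwartzLap μ lam u i)
    rw [schwartzLap_apply (schwartzLame μ lam u i)] at h
    simpa only [map_smul, map_sub, map_sum, schwartzLap_schwartzPd] using h
  have hA := congrArg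
    (fun g => s ^ 3 * dilatedAverage (gaussianSchwartz (En n)) s g x) hid
  simp only [dilatedAverage_smul, dilatedAverage_sub, dilatedAverage_sum] at hA
  have hsum : ∀ a : Fin n → Fin n → Fin n × Fin n, ∀ b : Fin n → Fin n,
      |∑ j, s ^ 3 * dilatedAverage (gaussianSchwartz (En n)) s
        (schwartzPd k (schwartzPd (a i j).1 (schwartzPd (a i j).2 (f (b j))))) x| ≤
      n * (F * gaussianDerivMass n) := by
    intro a b
    refine (Finset.abs_sum_le_sum_abs _ _).trans ?_
    refine (Finset.sum_le_card_nsmul _ _ (F * gaussianDerivMass n) fun j _ =>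
      abs_pow_three_mul_gaussianAverage_le s _ x _ _ _ hF0 (hF _)).trans_eq ?_
    simp
  have h1 := hsum (fun _ j => (j, j)) (fun _ => i)
  have h2 := hsum (fun i j => (i, j)) id
  simp only [← Finset.mul_sum, id] at h1 h2
  set S1 := ∑ j, dilatedAverage (gaussianSchwartz (En n)) s
    (schwartzPd k (schwartzPd j (schwartzPd j (f i)))) x
  set S2 := ∑ j, dilatedAverage (gaussianSchwartz (En n)) s
    (schwartzPd k (schwartzPd i (schwartzPd j (f j)))) x
  set T := dilatedAverage (gaussianSchwartz (En n)) s
    (schwartzLap (schwartzLap (schwartzPd k (u i)))) x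
  rw [div_mul_eq_mul_div, le_div_iff₀ hμν]
  calc |s ^ 3 * T| * (μ * (lam + 2 * μ))
      = |(lam + 2 * μ) * (s ^ 3 * S1) - (lam + μ) * (s ^ 3 * S2)| := by
        rw [show |s ^ 3 * T| * (μ * (lam + 2 * μ)) = |s ^ 3 * T * (μ * (lam + 2 * μ))| by
          rw [abs_mul _ (μ * _), abs_of_pos hμν]]
        congr 1
        linear_combination hA
    _ ≤ |(lam + 2 * μ) * (s ^ 3 * S1)| + |(lam + μ) * (s ^ 3 * S2)| := abs_sub _ _
    _ = (lam + 2 * μ) * |s ^ 3 * S1| + |lam + μ| * |s ^ 3 * S2| := by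
        rw [abs_mul, abs_of_pos hν, abs_mul (lam + μ)]
    _ ≤ (lam + 2 * μ) * (n * (F * gaussianDerivMass n)) +
          |lam + μ| * (n * (F * gaussianDerivMass n)) := by gcongr
    _ = _ := by ring

theorem abs_gaussianAverage_sub_le (g : 𝓢(En n, ℝ)) {M : ℝ} (hM0 : 0 ≤ M)
    (hM : ∀ y, |g y| ≤ M) (k : Fin n) {R : ℝ} (hR : 0 < R) (x : En n) :
    |dilatedAverage (gaussianSchwartz (En n)) R (schwartzPd k g) x -
        R ^ 2 / 2 * dilatedAverage (gaussianSchwartz (En n)) R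
          (schwartzLap (schwartzPd k g)) x| ≤
      (1 + n) * gaussianDerivMass n * (M / R) := by
  rw [schwartzLap_apply, dilatedAverage_sum]
  set S := ∑ j, dilatedAverage (gaussianSchwartz (En n)) R
    (schwartzPd j (schwartzPd j (schwartzPd k g))) x with hS
  have h1 := abs_mul_gaussianAverage_schwartzPd_le R g x k hM0 hM
  have h2 : |R ^ 3 * S| ≤ n * (M * gaussianDerivMass n) := by
    rw [hS, Finset.mul_sum]
    refine (Finset.abs_sum_le_sum_abs _ _).trans ?_
    refine (Finset.sum_le_card_nsmul _ _ (M * gaussianDerivMass n) fun j _ =>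
      abs_pow_three_mul_gaussianAverage_le R _ x _ _ _ hM0 hM).trans_eq ?_
    simp
  set A := dilatedAverage (gaussianSchwartz (En n)) R (schwartzPd k g) x
  rw [mul_div_assoc', le_div_iff₀ hR]
  calc |A - R ^ 2 / 2 * S| * R = |R * A - R ^ 3 * S / 2| := by
        rw [show |A - R ^ 2 / 2 * S| * R = |(A - R ^ 2 / 2 * S) * R| by
          rw [abs_mul, abs_of_pos hR]]
        congr 1
        ring
    _ ≤ |R * A| + |R ^ 3 * S / 2| := abs_sub _ _
    _ ≤ |R * A| + |R ^ 3 * S| := by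
        rw [abs_div, abs_two]
        linarith [abs_nonneg (R ^ 3 * S)]
    _ ≤ _ := by linarith

theorem exists_abs_schwartzPd_le {μ lam : ℝ} (hμ : 0 < μ) (hν : 0 < lam + 2 * μ) :
    ∃ C : ℝ, 0 ≤ C ∧ ∀ (u : Fin n → 𝓢(En n, ℝ)) (M F : ℝ), 0 ≤ M → 0 ≤ F →
      (∀ i y, |u i y| ≤ M) → (∀ i y, |schwartzLame μ lam u i y| ≤ F) →
      ∀ i k x R, 0 < R → |schwartzPd k (u i) x| ≤ C * (M / R + R * F) := by
  set c := ∫ z, gaussianSchwartz (En n) z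
  have hc : 0 < c := integral_gaussianSchwartz_pos
  have hK := gaussianDerivMass_nonneg (n := n)
  set a := (1 + n) * gaussianDerivMass n
  set b := (lam + 2 * μ + |lam + μ|) * (n * gaussianDerivMass n) / (μ * (lam + 2 * μ))
  have ha : 0 ≤ a := by positivity
  have hb : 0 ≤ b := by positivity
  refine ⟨(a + b) / c, by positivity, fun u M F hM0 hF0 hM hF i k x R hR => ?_⟩
  set B : ℝ → ℝ := fun s => dilatedAverage (gaussianSchwartz (En n)) s (schwartzPd k (u i)) x -
    s ^ 2 / 2 * dilatedAverage (gaussianSchwartz (En n)) s (schwartzLap (schwartzPd k (u i))) x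
    with hB
  have hB0 : B 0 = c * schwartzPd k (u i) x := by
    simp [hB, dilatedAverage_zero, c, mul_comm]
  have hBR : |B R| ≤ a * (M / R) := abs_gaussianAverage_sub_le (u i) hM0 (hM i) k hR x
  have hmv : |B R - B 0| ≤ b * F * R := by
    have := Convex.norm_image_sub_le_of_norm_hasDerivWithin_le (s := Set.univ) (x := 0) (y := R)
      (C := b * F) (fun s _ =>
        (hasDerivAt_gaussianAverage_sub s (schwartzPd k (u i)) x).hasDerivWithinAt)
      (fun s _ => by
        have h := abs_gaussianAverage_bilaplacian_le hμ hν u hF0 hF i k s x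
        rw [norm_neg, Real.norm_eq_abs, div_mul_eq_mul_div, abs_div, abs_two]
        linarith [abs_nonneg (s ^ 3 * dilatedAverage (gaussianSchwartz (En n)) s
          (schwartzLap (schwartzLap (schwartzPd k (u i)))) x)])
      convex_univ (Set.mem_univ _) (Set.mem_univ _)
    rwa [sub_zero, Real.norm_eq_abs, Real.norm_eq_abs, abs_of_pos hR] at this
  have hfin : c * |schwartzPd k (u i) x| ≤ a * (M / R) + b * F * R := by
    rw [show c * |schwartzPd k (u i) x| = |c * schwartzPd k (u i) x| by
      rw [abs_mul, abs_of_pos hc], ← hB0]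
    have := abs_sub_abs_le_abs_sub (B 0) (B R)
    rw [abs_sub_comm (B 0) (B R)] at this
    linarith
  rw [div_mul_eq_mul_div, le_div_iff₀ hc]
  have hMR : 0 ≤ M / R := by positivity
  have hRF : 0 ≤ R * F := by positivity
  nlinarith [mul_nonneg ha hRF, mul_nonneg hb hMR]

end Averages

theorem le_sqrt_mul_sqrt_of_forall_scale {a C M F : ℝ} (hM : 0 ≤ M) (hF : 0 ≤ F) (hC : 0 ≤ C)
    (h : ∀ R, 0 < R → a ≤ C * (M / R + R * F)) : a ≤ 2 * C * (√M * √F) := by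
  have key : ∀ ε : ℝ, 0 < ε → a ≤ 2 * C * (√(M + ε) * √(F + ε)) := by
    intro ε hε
    have hm : 0 < √(M + ε) := Real.sqrt_pos.2 (by linarith)
    have hf : 0 < √(F + ε) := Real.sqrt_pos.2 (by linarith)
    have h1 : M / (√(M + ε) / √(F + ε)) ≤ √(M + ε) * √(F + ε) := by
      rw [div_le_iff₀ (by positivity)]
      have : √(M + ε) * √(F + ε) * (√(M + ε) / √(F + ε)) = √(M + ε) ^ 2 := by field_simp
      rw [this, Real.sq_sqrt (by linarith)]
      linarith
    have h2 : √(M + ε) / √(F + ε) * F ≤ √(M + ε) * √(F + ε) := by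
      rw [div_mul_eq_mul_div, div_le_iff₀ hf, mul_assoc]
      gcongr
      rw [Real.mul_self_sqrt (by linarith)]
      linarith
    calc a ≤ _ := h (√(M + ε) / √(F + ε)) (by positivity)
      _ ≤ C * (√(M + ε) * √(F + ε) + √(M + ε) * √(F + ε)) := by gcongr
      _ = _ := by ring
  have hlim : Filter.Tendsto (fun ε : ℝ => 2 * C * (√(M + ε) * √(F + ε)))
      (nhdsWithin 0 (Set.Ioi 0)) (nhds (2 * C * (√M * √F))) := by
    have : Continuous fun ε : ℝ => 2 * C * (√(M + ε) * √(F + ε)) := by fun_prop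
    simpa using (this.tendsto 0).mono_left nhdsWithin_le_nhds
  exact ge_of_tendsto hlim (Filter.eventually_of_mem self_mem_nhdsWithin key)

section VectorFields

variable {n : ℕ}

theorem euclidean_norm_le_sum_abs (y : En n) : ‖y‖ ≤ ∑ i, |y i| := by
  conv_lhs => rw [← (EuclideanSpace.basisFun (Fin n) ℝ).sum_repr y]
  refine (norm_sum_le _ _).trans_eq ?_
  simp [norm_smul]

theorem norm_clm_le_of_entries_le (L : En n →L[ℝ] En n) {T : ℝ} (hT : 0 ≤ T)
    (h : ∀ i k, |L (EuclideanSpace.single k 1) i| ≤ T) : ‖L‖ ≤ n * (n * T) := by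
  refine L.opNorm_le_bound (by positivity) fun w => ?_
  have hw : L w = ∑ k, w k • L (EuclideanSpace.single k 1) := by
    conv_lhs => rw [← (EuclideanSpace.basisFun (Fin n) ℝ).sum_repr w]
    simp
  have hcol : ∀ k, ‖L (EuclideanSpace.single k 1)‖ ≤ n * T := fun k =>
    (euclidean_norm_le_sum_abs _).trans
      ((Finset.sum_le_card_nsmul _ _ T fun i _ => h i k).trans_eq (by simp))
  rw [hw]
  refine (norm_sum_le _ _).trans ((Finset.sum_le_card_nsmul _ _ (n * T * ‖w‖)
    fun k _ => ?_).trans_eq (by simp; ring))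
  rw [norm_smul, mul_comm]
  gcongr
  · exact hcol k
  · exact PiLp.norm_apply_le w k

/-- The components of a Schwartz vector field. -/
def schwartzComponent (v : 𝓢(En n, En n)) (i : Fin n) : 𝓢(En n, ℝ) :=
  v.postcompCLM (EuclideanSpace.proj (𝕜 := ℝ) i)

theorem schwartzPd_schwartzComponent (v : 𝓢(En n, En n)) (i k : Fin n) (x : En n) :
    schwartzPd k (schwartzComponent v i) x = fderiv ℝ v x (EuclideanSpace.single k 1) i := by
  have h := ((EuclideanSpace.proj (𝕜 := ℝ) i : En n →L[ℝ] ℝ).hasFDerivAt.comp x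
    (v.hasFDerivAt x)).fderiv
  rw [schwartzPd_apply]
  change fderiv ℝ ((EuclideanSpace.proj (𝕜 := ℝ) i : En n →L[ℝ] ℝ) ∘ v) x _ = _
  rw [h]
  rfl

theorem lame_apply_eq_schwartzLame (μ lam : ℝ) (v : 𝓢(En n, En n)) (x : En n) (i : Fin n) :
    lame μ lam v x i = schwartzLame μ lam (schwartzComponent v) i x := by
  have hpd : ∀ (k : Fin n) (g : 𝓢(En n, ℝ)), pdv k g = schwartzPd k g := fun _ _ => rfl
  have hc : ∀ i, (fun z => v z i) = schwartzComponent v i := fun _ => rfl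
  have hdiv : (fun y => ∑ j, pdv j (fun z => v z j) y) =
      (∑ j, schwartzPd j (schwartzComponent v j) : 𝓢(En n, ℝ)) := by
    ext y
    simp [hc, hpd]
  have hlap : ∑ j, pdv j (fun y => pdv j (fun z => v z i) y) x =
      schwartzLap (schwartzComponent v i) x := by
    rw [schwartzLap_apply]
    simp only [hc, hpd, sum_apply]
  change μ * (∑ j, pdv j (fun y => pdv j (fun z => v z i) y) x) + (lam + μ) *
    pdv i (fun y => ∑ j, pdv j (fun z => v z j) y) x = _
  rw [hdiv, hlap, hpd]
  simp [schwartzLame]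

theorem continuous_lame (μ lam : ℝ) (v : 𝓢(En n, En n)) : Continuous (lame μ lam v) := by
  rw [(EuclideanSpace.equiv (Fin n) ℝ).toHomeomorph.isInducing.continuous_iff]
  refine continuous_pi fun i => ?_
  exact (schwartzLame μ lam (schwartzComponent v) i).continuous.congr fun x =>
    (lame_apply_eq_schwartzLame μ lam v x i).symm

theorem eLpNorm_top_lame_lt_top (μ lam : ℝ) (v : 𝓢(En n, En n)) :
    eLpNorm (lame μ lam v) ⊤ volume < ⊤ := by
  rw [eLpNorm_exponent_top]
  refine eLpNormEssSup_lt_top_of_ae_bound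
    (C := ∑ i, SchwartzMap.seminorm ℝ 0 0 (schwartzLame μ lam (schwartzComponent v) i))
    (.of_forall fun x => (euclidean_norm_le_sum_abs _).trans ?_)
  refine Finset.sum_le_sum fun i _ => ?_
  rw [lame_apply_eq_schwartzLame]
  exact SchwartzMap.norm_le_seminorm ℝ (schwartzLame μ lam (schwartzComponent v) i) x

end VectorFields

theorem norm_le_toReal_eLpNorm_top {X E : Type*} [TopologicalSpace X] [MeasurableSpace X]
    [NormedAddCommGroup E] {ρ : Measure X} [ρ.IsOpenPosMeasure] {f : X → E} (hf : Continuous f)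
    (hfin : eLpNorm f ⊤ ρ < ⊤) (x : X) : ‖f x‖ ≤ (eLpNorm f ⊤ ρ).toReal := by
  have hae : ∀ᵐ y ∂ρ, ‖f y‖ ≤ (eLpNorm f ⊤ ρ).toReal := by
    filter_upwards [ae_le_eLpNormEssSup (f := f) (μ := ρ)] with y hy
    rw [← toReal_enorm, eLpNorm_exponent_top] at *
    exact ENNReal.toReal_mono hfin.ne hy
  have hd : Dense {y | ‖f y‖ ≤ (eLpNorm f ⊤ ρ).toReal} := Measure.dense_of_ae hae
  have hc : IsClosed {y | ‖f y‖ ≤ (eLpNorm f ⊤ ρ).toReal} :=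
    isClosed_le hf.norm continuous_const
  have hx := hd x
  rwa [hc.closure_eq] at hx

/-- Interpolation inequality: there exists `C = C(n,μ,λ)` such that every Schwartz
vector field `v : ℝⁿ → ℝⁿ` satisfies `‖∇v‖_{L^∞} ≤ C ‖v‖_{L^∞}^{1/2} ‖𝓛v‖_{L^∞}^{1/2}`,
where `∇v` is the Jacobian of `v`. -/
theorem gradient_linfty_interpolation_lame (n : ℕ) (hn : 1 ≤ n) (μ lam : ℝ)
    (hμ : 0 < μ) (hν : 0 < lam + 2 * μ) :
    ∃ C : ℝ≥0, ∀ v : SchwartzMap (En n) (En n),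
      eLpNorm (fun x => fderiv ℝ (⇑v) x) ⊤ volume ≤
        C * (eLpNorm (⇑v) ⊤ volume) ^ ((1 : ℝ) / 2) *
          (eLpNorm (lame μ lam ⇑v) ⊤ volume) ^ ((1 : ℝ) / 2) := by
  obtain ⟨C, hC0, hC⟩ := exists_abs_schwartzPd_le (n := n) hμ hν
  refine ⟨(n * (n * (2 * C))).toNNReal, fun v => ?_⟩
  have hvfin : eLpNorm v ⊤ volume < ⊤ := v.eLpNorm_lt_top ⊤ volume
  have hlfin := eLpNorm_top_lame_lt_top μ lam v
  set M := (eLpNorm v ⊤ volume).toReal with hMdef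
  set F := (eLpNorm (lame μ lam v) ⊤ volume).toReal with hFdef
  have hM0 : 0 ≤ M := ENNReal.toReal_nonneg
  have hF0 : 0 ≤ F := ENNReal.toReal_nonneg
  have hM : ∀ i y, |schwartzComponent v i y| ≤ M := fun i y =>
    (PiLp.norm_apply_le (v y) i).trans (norm_le_toReal_eLpNorm_top v.continuous hvfin y)
  have hF : ∀ i y, |schwartzLame μ lam (schwartzComponent v) i y| ≤ F := fun i y => by
    rw [← lame_apply_eq_schwartzLame]
    exact (PiLp.norm_apply_le (lame μ lam v y) i).trans
      (norm_le_toReal_eLpNorm_top (continuous_lame μ lam v) hlfin y)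
  have hbound : ∀ x, ‖fderiv ℝ v x‖ ≤ n * (n * (2 * C)) * (√M * √F) := by
    intro x
    refine (norm_clm_le_of_entries_le (T := 2 * C * (√M * √F)) _ (by positivity)
      fun i k => ?_).trans_eq (by ring)
    rw [← schwartzPd_schwartzComponent]
    exact le_sqrt_mul_sqrt_of_forall_scale hM0 hF0 hC0
      fun R hR => hC _ M F hM0 hF0 hM hF i k x R hR
  have hMe : ENNReal.ofReal (√M) = eLpNorm v ⊤ volume ^ ((1 : ℝ) / 2) := by
    rw [Real.sqrt_eq_rpow, ← ENNReal.ofReal_rpow_of_nonneg hM0 (by norm_num),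
      ENNReal.ofReal_toReal hvfin.ne]
  have hFe : ENNReal.ofReal (√F) = eLpNorm (lame μ lam v) ⊤ volume ^ ((1 : ℝ) / 2) := by
    rw [Real.sqrt_eq_rpow, ← ENNReal.ofReal_rpow_of_nonneg hF0 (by norm_num),
      ENNReal.ofReal_toReal hlfin.ne]
  rw [eLpNorm_exponent_top]
  refine eLpNormEssSup_le_of_ae_enorm_bound (.of_forall fun x => ?_)
  rw [← hMe, ← hFe, ← ofReal_norm, mul_assoc, ← ENNReal.ofReal_mul (Real.sqrt_nonneg M)]
  change _ ≤ ENNReal.ofReal (n * (n * (2 * C))) * _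
  rw [← ENNReal.ofReal_mul (by positivity)]
  exact ENNReal.ofReal_le_ofReal (hbound x)
end
end

section
/- Let (X,‖·‖) be a real Banach space. Let A, with domain D(A) ⊆ X, generate a bounded analytic semigroup (T_A(t))_{t≥0} such that ‖T_A(t)x‖ → 0 as t → ∞ for every x ∈ X. Let B : X → X be a continuous linear bijection with continuous inverse B⁻¹, and assume that S := B∘A, with domain D(A), generates a bounded analytic semigroup (T_S(t))_{t≥0} such that ‖T_S(t)x‖ → 0 as t → ∞ for every x ∈ X. Then for every s ∈ (0,1) and q ∈ [1,∞] there exist constants c, C > 0, independent of x, such that for every x ∈ D(A): c · ‖ t ↦ t^{1−s}‖A(T_A(t)x)‖ ‖_{L^q((0,∞),dt/t)} ≤ ‖ t ↦ t^{1−s}‖S(T_S(t)x)‖ ‖_{L^q((0,∞),dt/t)} ≤ C · ‖ t ↦ t^{1−s}‖A(T_A(t)x)‖ ‖_{L^q((0,∞),dt/t)}. -/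
open MeasureTheory
open scoped ENNReal NNReal

noncomputable section

variable {X : Type*} [NormedAddCommGroup X] [NormedSpace ℝ X] [CompleteSpace X]

/-- `S`, a linear operator defined on the subspace `D ⊆ X`, generates the bounded
analytic semigroup `(T(t))_{t≥0}` with constants `M, C₀`. -/
structure IsBAS (D : Set X) (S : X → X) (T : ℝ → X →L[ℝ] X) (M C₀ : ℝ) : Prop where
  zero_mem : (0 : X) ∈ D
  add_mem : ∀ x ∈ D, ∀ y ∈ D, x + y ∈ D
  smul_mem : ∀ (c : ℝ), ∀ x ∈ D, c • x ∈ D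
  map_add : ∀ x ∈ D, ∀ y ∈ D, S (x + y) = S x + S y
  map_smul : ∀ (c : ℝ), ∀ x ∈ D, S (c • x) = c • S x
  T_zero : T 0 = ContinuousLinearMap.id ℝ X
  T_semigroup : ∀ t : ℝ, 0 ≤ t → ∀ s : ℝ, 0 ≤ s → T (t + s) = (T t).comp (T s)
  T_cont : ∀ x : X, ContinuousOn (fun t : ℝ => T t x) (Set.Ici 0)
  T_bdd : ∀ t : ℝ, 0 ≤ t → ∀ x : X, ‖T t x‖ ≤ M * ‖x‖
  T_mem : ∀ x ∈ D, ∀ t : ℝ, 0 ≤ t → T t x ∈ D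
  T_comm : ∀ x ∈ D, ∀ t : ℝ, 0 ≤ t → S (T t x) = T t (S x)
  T_deriv : ∀ x ∈ D, ∀ t : ℝ, 0 ≤ t →
    HasDerivWithinAt (fun τ : ℝ => T τ x) (T t (S x)) (Set.Ici 0) t
  analytic_mem : ∀ x : X, ∀ t : ℝ, 0 < t → T t x ∈ D
  analytic_bdd : ∀ x : X, ∀ t : ℝ, 0 < t → t * ‖S (T t x)‖ ≤ C₀ * ‖x‖

/-- The (extended-real-valued) seminorm `‖x‖_{Ḃˢ} = ∫₀^∞ t^{−s/2}‖S(T(t)x)‖ dt`. -/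
def BsNorm (S : X → X) (T : ℝ → X →L[ℝ] X) (s : ℝ) (x : X) : ℝ≥0∞ :=
  ∫⁻ t in Set.Ioi (0 : ℝ), ENNReal.ofReal (t ^ (-s / 2) * ‖S (T t x)‖)

/-- The (extended-real-valued) seminorm `‖x‖_{Ḃ⁻ˢ} = ∫₀^∞ t^{s/2−1}‖T(t)x‖ dt`. -/
def BnegNorm (T : ℝ → X →L[ℝ] X) (s : ℝ) (x : X) : ℝ≥0∞ :=
  ∫⁻ t in Set.Ioi (0 : ℝ), ENNReal.ofReal (t ^ (s / 2 - 1) * ‖T t x‖)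


/-- The measure `dt/t` on `(0,∞)`. -/
def mulHaar : Measure ℝ :=
  (volume.restrict (Set.Ioi (0 : ℝ))).withDensity fun t => ENNReal.ofReal t⁻¹

open Filter Topology Set

lemma ae_mulHaar_pos : ∀ᵐ t ∂mulHaar, 0 < t :=
  (withDensity_absolutelyContinuous _ _).ae_le (ae_restrict_mem measurableSet_Ioi)

lemma aestronglyMeasurable_mulHaar {f : ℝ → ℝ} (hf : ContinuousOn f (Ioi 0)) :
    AEStronglyMeasurable f mulHaar :=
  (hf.aestronglyMeasurable measurableSet_Ioi).mono_ac (withDensity_absolutelyContinuous _ _)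

lemma measurePreserving_mul_left_mulHaar {a : ℝ} (ha : 0 < a) :
    MeasurePreserving (a * ·) mulHaar mulHaar := by
  refine ⟨measurable_const_mul a, Measure.ext fun E hE => ?_⟩
  have hmul : Measurable (a * · : ℝ → ℝ) := measurable_const_mul a
  have hm : Measurable fun t : ℝ => ENNReal.ofReal t⁻¹ := by fun_prop
  have hEI : MeasurableSet (E ∩ Ioi 0) := hE.inter measurableSet_Ioi
  have hpre : (a * ·) ⁻¹' E ∩ Ioi 0 = (a * ·) ⁻¹' (E ∩ Ioi 0) := by
    ext t
    simp [mul_pos_iff_of_pos_left ha]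
  have hscale : ∀ t ∈ (a * ·) ⁻¹' (E ∩ Ioi 0),
      ENNReal.ofReal t⁻¹ = ENNReal.ofReal a * ENNReal.ofReal (a * t)⁻¹ := by
    intro t _
    rw [← ENNReal.ofReal_mul ha.le, mul_inv, mul_inv_cancel_left₀ ha.ne']
  rw [Measure.map_apply hmul hE, mulHaar, withDensity_apply _ (hmul hE), withDensity_apply _ hE,
    Measure.restrict_restrict (hmul hE), Measure.restrict_restrict hE, hpre,
    setLIntegral_congr_fun (hmul hEI) hscale,
    lintegral_const_mul _ (show Measurable fun t : ℝ => ENNReal.ofReal (a * t)⁻¹ from hm.comp hmul),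
    ← setLIntegral_map hEI hm hmul,
    Real.map_volume_mul_left ha.ne', Measure.restrict_smul, lintegral_smul_measure, smul_eq_mul,
    ← mul_assoc, ← ENNReal.ofReal_mul ha.le, abs_of_pos (inv_pos.2 ha), mul_inv_cancel₀ ha.ne',
    ENNReal.ofReal_one, one_mul]

/-- A discrete Hardy inequality in `L^q(dt/t)`: if `φ` is dominated, up to an error vanishing
pointwise, by a geometrically weighted sum of dyadic dilates of `g`, then `‖φ‖_q ≲ ‖g‖_q`. -/
lemma eLpNorm_mulHaar_le_of_dyadic_bound {φ g R : ℝ → ℝ} {a b ρ : ℝ} {q : ℝ≥0∞} (hq : 1 ≤ q)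
    (hφ : ContinuousOn φ (Ioi 0)) (hg : ContinuousOn g (Ioi 0)) (hφ0 : ∀ t, 0 < t → 0 ≤ φ t)
    (hg0 : ∀ t, 0 < t → 0 ≤ g t) (ha : 0 ≤ a) (hb : 0 ≤ b) (hρ0 : 0 ≤ ρ) (hρ1 : ρ < 1)
    (h : ∀ t, 0 < t → ∀ n : ℕ, φ t ≤ a * g t
      + b * ∑ k ∈ Finset.range n, ρ ^ (k + 1) * g ((1 / 2) ^ (k + 1) * t) + R t * (1 / 2) ^ n) :
    eLpNorm φ q mulHaar ≤ ENNReal.ofReal (a + b * (1 - ρ)⁻¹) * eLpNorm g q mulHaar := by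
  have hpow (k : ℕ) : (0 : ℝ) < (1 / 2) ^ (k + 1) := by positivity
  have hgm := aestronglyMeasurable_mulHaar hg
  set d : ℕ → ℝ → ℝ := fun k => ρ ^ (k + 1) • (g ∘ ((1 / 2 : ℝ) ^ (k + 1) * ·)) with hd
  have hdm (k : ℕ) : AEStronglyMeasurable (d k) mulHaar :=
    (hgm.comp_measurePreserving (measurePreserving_mul_left_mulHaar (hpow k))).const_smul _
  have hdn (k : ℕ) :
      eLpNorm (d k) q mulHaar ≤ ENNReal.ofReal (ρ ^ (k + 1)) * eLpNorm g q mulHaar := by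
    refine eLpNorm_const_smul_le.trans_eq ?_
    rw [eLpNorm_comp_measurePreserving hgm (measurePreserving_mul_left_mulHaar (hpow k)),
      Real.enorm_eq_ofReal (by positivity)]
  set H : ℕ → ℝ → ℝ := fun n => a • g + b • ∑ k ∈ Finset.range n, d k with hH
  have hsm (n : ℕ) : AEStronglyMeasurable (∑ k ∈ Finset.range n, d k) mulHaar :=
    Finset.aestronglyMeasurable_sum _ fun k _ => hdm k
  have hHm (n : ℕ) : AEStronglyMeasurable (H n) mulHaar :=
    (hgm.const_smul a).add ((hsm n).const_smul b)
  have hHapp (n : ℕ) (t : ℝ) : H n t =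
      a * g t + b * ∑ k ∈ Finset.range n, ρ ^ (k + 1) * g ((1 / 2) ^ (k + 1) * t) := by
    simp [hH, hd]
  have hH0 (n : ℕ) {t : ℝ} (ht : 0 < t) : 0 ≤ H n t := by
    rw [hHapp]
    have := hg0 t ht
    have : 0 ≤ ∑ k ∈ Finset.range n, ρ ^ (k + 1) * g ((1 / 2) ^ (k + 1) * t) :=
      Finset.sum_nonneg fun k _ => mul_nonneg (by positivity) (hg0 _ (mul_pos (hpow k) ht))
    positivity
  have hgeom (n : ℕ) : ∑ k ∈ Finset.range n, ρ ^ (k + 1) ≤ (1 - ρ)⁻¹ := by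
    calc ∑ k ∈ Finset.range n, ρ ^ (k + 1) ≤ ∑ k ∈ Finset.range n, ρ ^ k :=
          Finset.sum_le_sum fun k _ => pow_le_pow_of_le_one hρ0 hρ1.le k.le_succ
      _ ≤ ∑' k, ρ ^ k :=
          (summable_geometric_of_lt_one hρ0 hρ1).sum_le_tsum _ fun k _ => by positivity
      _ = _ := tsum_geometric_of_lt_one hρ0 hρ1
  have hHn (n : ℕ) :
      eLpNorm (H n) q mulHaar ≤ ENNReal.ofReal (a + b * (1 - ρ)⁻¹) * eLpNorm g q mulHaar := by
    calc eLpNorm (H n) q mulHaar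
        ≤ eLpNorm (a • g) q mulHaar + eLpNorm (b • ∑ k ∈ Finset.range n, d k) q mulHaar :=
          eLpNorm_add_le (hgm.const_smul a) ((hsm n).const_smul b) hq
      _ ≤ ‖a‖ₑ * eLpNorm g q mulHaar
          + ‖b‖ₑ * ∑ k ∈ Finset.range n, eLpNorm (d k) q mulHaar := by
          gcongr
          · exact eLpNorm_const_smul_le
          · refine eLpNorm_const_smul_le.trans ?_
            gcongr
            exact eLpNorm_sum_le (fun k _ => hdm k) hq
      _ ≤ ‖a‖ₑ * eLpNorm g q mulHaar
          + ‖b‖ₑ * ∑ k ∈ Finset.range n, ENNReal.ofReal (ρ ^ (k + 1)) * eLpNorm g q mulHaar := by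
          gcongr with k _
          exact hdn k
      _ = ENNReal.ofReal (a + b * ∑ k ∈ Finset.range n, ρ ^ (k + 1)) * eLpNorm g q mulHaar := by
          rw [← Finset.sum_mul, ← ENNReal.ofReal_sum_of_nonneg fun k _ => by positivity,
            Real.enorm_eq_ofReal ha, Real.enorm_eq_ofReal hb, ← mul_assoc,
            ← ENNReal.ofReal_mul hb, ← add_mul, ENNReal.ofReal_add ha (by positivity)]
      _ ≤ _ := by
          gcongr
          exact hgeom n
  have hlim : ∀ᵐ t ∂mulHaar, Tendsto (fun n => min (φ t) (H n t)) atTop (𝓝 (φ t)) := by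
    filter_upwards [ae_mulHaar_pos] with t ht
    have hR : Tendsto (fun n : ℕ => φ t - |R t| * (1 / 2 : ℝ) ^ n) atTop (𝓝 (φ t)) := by
      simpa using tendsto_const_nhds.sub
        ((tendsto_pow_atTop_nhds_zero_of_lt_one (by norm_num) (by norm_num :
          (1 / 2 : ℝ) < 1)).const_mul |R t|)
    refine tendsto_of_tendsto_of_tendsto_of_le_of_le hR tendsto_const_nhds (fun n => ?_)
      fun n => min_le_left _ _
    have h1 := h t ht n
    have h2 : R t * (1 / 2) ^ n ≤ |R t| * (1 / 2) ^ n := by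
      gcongr
      exact le_abs_self _
    refine le_min (sub_le_self _ (by positivity)) ?_
    rw [hHapp]
    linarith
  refine (Lp.eLpNorm_lim_le_liminf_eLpNorm (fun n =>
    (aestronglyMeasurable_mulHaar hφ).inf (hHm n)) φ hlim).trans ?_
  refine liminf_le_of_frequently_le' (Frequently.of_forall fun n => le_trans ?_ (hHn n))
  refine eLpNorm_mono_ae_real ?_
  filter_upwards [ae_mulHaar_pos] with t ht
  rw [Real.norm_of_nonneg (show 0 ≤ (φ ⊓ H n) t from le_inf (hφ0 t ht) (hH0 n ht))]
  exact inf_le_right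

namespace IsBAS

variable {D : Set X} {A : X → X} {T : ℝ → X →L[ℝ] X} {M C₀ : ℝ}

omit [CompleteSpace X]

lemma sub_mem (hA : IsBAS D A T M C₀) {x y : X} (hx : x ∈ D) (hy : y ∈ D) : x - y ∈ D := by
  simpa [sub_eq_add_neg] using hA.add_mem x hx _ (hA.smul_mem (-1) y hy)

lemma norm_apply_le (hA : IsBAS D A T M C₀) {t : ℝ} (ht : 0 ≤ t) (x : X) :
    ‖T t x‖ ≤ |M| * ‖x‖ :=
  (hA.T_bdd t ht x).trans (by gcongr; exact le_abs_self M)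

lemma norm_generator_le (hA : IsBAS D A T M C₀) {t : ℝ} (ht : 0 < t) (x : X) :
    ‖A (T t x)‖ ≤ |C₀| / t * ‖x‖ := by
  rw [div_mul_eq_mul_div, le_div_iff₀ ht, mul_comm]
  exact (hA.analytic_bdd x t ht).trans (by gcongr; exact le_abs_self C₀)

lemma continuousOn_rpow_mul_norm (hA : IsBAS D A T M C₀) {x : X} (hx : x ∈ D) (r : ℝ) :
    ContinuousOn (fun t : ℝ => t ^ r * ‖A (T t x)‖) (Ioi 0) := by
  have h : ContinuousOn (fun t : ℝ => t ^ r * ‖T t (A x)‖) (Ioi 0) :=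
    (continuousOn_id.rpow_const fun t ht => Or.inl (ne_of_gt ht)).mul
      ((hA.T_cont (A x)).mono Ioi_subset_Ici_self).norm
  exact h.congr fun t ht => by simp only [hA.T_comm x hx t (le_of_lt ht)]

lemma norm_sub_le (hA : IsBAS D A T M C₀) {x : X} (hx : x ∈ D) {a b : ℝ} (ha : 0 ≤ a)
    (hab : a ≤ b) : ‖T b x - T a x‖ ≤ |M| * ‖A (T a x)‖ * (b - a) := by
  refine norm_image_sub_le_of_norm_deriv_le_segment' (f := fun τ => T τ x)
    (f' := fun τ => T τ (A x)) (fun τ hτ => ?_) (fun τ hτ => ?_) b (right_mem_Icc.2 hab)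
  · exact (hA.T_deriv x hx τ (ha.trans hτ.1)).mono fun u hu => ha.trans hu.1
  · have hsplit := hA.T_semigroup (τ - a) (sub_nonneg.2 hτ.1) a ha
    rw [sub_add_cancel] at hsplit
    rw [hsplit, ContinuousLinearMap.comp_apply, ← hA.T_comm x hx a ha]
    exact hA.norm_apply_le (sub_nonneg.2 hτ.1) _

lemma norm_self_sub_le_dyadic (hA : IsBAS D A T M C₀) {x : X} (hx : x ∈ D) {t : ℝ} (ht : 0 ≤ t)
    (n : ℕ) : ‖x - T t x‖ ≤ |M| * ∑ k ∈ Finset.range n,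
      (1 / 2) ^ (k + 1) * t * ‖A (T ((1 / 2) ^ (k + 1) * t) x)‖
        + |M| * ‖A x‖ * t * (1 / 2) ^ n := by
  have hmain (n : ℕ) : ‖T ((1 / 2) ^ n * t) x - T t x‖ ≤ |M| * ∑ k ∈ Finset.range n,
      (1 / 2) ^ (k + 1) * t * ‖A (T ((1 / 2) ^ (k + 1) * t) x)‖ := by
    induction n with
    | zero => simp
    | succ n ih =>
      have h0 : 0 ≤ (1 / 2 : ℝ) ^ (n + 1) * t := by positivity
      have hle : (1 / 2 : ℝ) ^ (n + 1) * t ≤ (1 / 2) ^ n * t := by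
        rw [pow_succ]
        nlinarith [show 0 ≤ (1 / 2 : ℝ) ^ n * t by positivity]
      have hstep := hA.norm_sub_le hx h0 hle
      have hdiff : (1 / 2 : ℝ) ^ n * t - (1 / 2) ^ (n + 1) * t = (1 / 2) ^ (n + 1) * t := by ring
      rw [hdiff, norm_sub_rev] at hstep
      rw [Finset.sum_range_succ, mul_add]
      have htri := norm_sub_le_norm_sub_add_norm_sub (T ((1 / 2) ^ (n + 1) * t) x)
        (T ((1 / 2) ^ n * t) x) (T t x)
      linarith
  have hlast := hA.norm_sub_le hx le_rfl (show 0 ≤ (1 / 2 : ℝ) ^ n * t by positivity)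
  rw [hA.T_zero, ContinuousLinearMap.id_apply, norm_sub_rev, sub_zero] at hlast
  have htri := norm_sub_le_norm_sub_add_norm_sub x (T ((1 / 2) ^ n * t) x) (T t x)
  have := hmain n
  linarith

/-- If the generators `A` and `S` share their domain and `‖S y‖ ≤ K‖A y‖` there, then `x` is
split as `(x - T(t)x) + T(t)x`, with `T` the semigroup of `A`. -/
lemma norm_generator_le_of_norm_le (hA : IsBAS D A T M C₀) {S : X → X} {TS : ℝ → X →L[ℝ] X}
    {MS CS K : ℝ} (hS : IsBAS D S TS MS CS) (hK : ∀ y ∈ D, ‖S y‖ ≤ K * ‖A y‖) {x : X}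
    (hx : x ∈ D) {t : ℝ} (ht : 0 < t) :
    ‖S (TS t x)‖ ≤ |CS| / t * ‖x - T t x‖ + |MS| * K * ‖A (T t x)‖ := by
  have hTx : T t x ∈ D := hA.T_mem x hx t ht.le
  have hsub : x - T t x ∈ D := hA.sub_mem hx hTx
  have hsplit : S (TS t x) = S (TS t (x - T t x)) + S (TS t (T t x)) := by
    rw [← hS.map_add _ (hS.T_mem _ hsub t ht.le) _ (hS.T_mem _ hTx t ht.le), ← _root_.map_add,
      sub_add_cancel]
  rw [hsplit]
  refine (norm_add_le _ _).trans (add_le_add (hS.norm_generator_le ht _) ?_)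
  rw [hS.T_comm _ hTx t ht.le, mul_assoc]
  exact (hS.norm_apply_le ht.le _).trans (by gcongr; exact hK _ hTx)

lemma eLpNorm_generator_le (hA : IsBAS D A T M C₀) {S : X → X} {TS : ℝ → X →L[ℝ] X}
    {MS CS K : ℝ} (hS : IsBAS D S TS MS CS) (hK0 : 0 ≤ K) (hK : ∀ y ∈ D, ‖S y‖ ≤ K * ‖A y‖)
    {s : ℝ} (hs : 0 < s) {q : ℝ≥0∞} (hq : 1 ≤ q) :
    ∃ C : ℝ, 0 < C ∧ ∀ x ∈ D, eLpNorm (fun t : ℝ => t ^ (1 - s) * ‖S (TS t x)‖) q mulHaar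
      ≤ ENNReal.ofReal C * eLpNorm (fun t : ℝ => t ^ (1 - s) * ‖A (T t x)‖) q mulHaar := by
  have hρ0 : (0 : ℝ) < (1 / 2) ^ s := by positivity
  have hρ1 : (1 / 2 : ℝ) ^ s < 1 := Real.rpow_lt_one (by norm_num) (by norm_num) hs
  have hnn (r : ℝ) (y : X) (t : ℝ) (ht : 0 < t) : 0 ≤ t ^ r * ‖y‖ := by positivity
  refine ⟨|MS| * K + |CS| * |M| * (1 - (1 / 2 : ℝ) ^ s)⁻¹ + 1, ?_, fun x hx => ?_⟩
  · have := inv_pos.2 (sub_pos.2 hρ1)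
    positivity
  refine (eLpNorm_mulHaar_le_of_dyadic_bound (a := |MS| * K) (b := |CS| * |M|)
    (R := fun t => t ^ (1 - s) * (|CS| * |M| * ‖A x‖)) hq
    (hS.continuousOn_rpow_mul_norm hx (1 - s)) (hA.continuousOn_rpow_mul_norm hx (1 - s))
    (fun t ht => hnn _ _ t ht) (fun t ht => hnn _ _ t ht) (by positivity) (by positivity)
    hρ0.le hρ1 fun t ht n => ?_).trans
    (by gcongr ENNReal.ofReal ?_ * _; exact (lt_add_one _).le)
  have hterm (k : ℕ) : ((1 / 2 : ℝ) ^ s) ^ (k + 1) *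
      (((1 / 2) ^ (k + 1) * t) ^ (1 - s) * ‖A (T ((1 / 2) ^ (k + 1) * t) x)‖)
      = t ^ (1 - s) / t * ((1 / 2) ^ (k + 1) * t * ‖A (T ((1 / 2) ^ (k + 1) * t) x)‖) := by
    have hpow : (0 : ℝ) < (1 / 2) ^ (k + 1) := by positivity
    rw [Real.mul_rpow hpow.le ht.le, Real.rpow_sub hpow, Real.rpow_one, ← Real.rpow_natCast,
      ← Real.rpow_mul (by norm_num), mul_comm s, Real.rpow_mul (by norm_num), Real.rpow_natCast]
    have : ((1 / 2 : ℝ) ^ (k + 1)) ^ s ≠ 0 := (Real.rpow_pos_of_pos hpow s).ne'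
    field_simp
  simp only [hterm]
  rw [← Finset.mul_sum]
  have h1 := hA.norm_generator_le_of_norm_le hS hK hx ht
  have h2 := hA.norm_self_sub_le_dyadic hx ht.le n
  set dyadicSum := ∑ k ∈ Finset.range n, (1 / 2) ^ (k + 1) * t * ‖A (T ((1 / 2) ^ (k + 1) * t) x)‖
  calc t ^ (1 - s) * ‖S (TS t x)‖
      ≤ t ^ (1 - s) * (|CS| / t * (|M| * dyadicSum + |M| * ‖A x‖ * t * (1 / 2) ^ n)
          + |MS| * K * ‖A (T t x)‖) := by
        gcongr
        exact h1.trans (by gcongr)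
    _ = _ := by
        field_simp
        ring

end IsBAS

/-- Equivalence of Besov-type norms with positive regularity for a composite
operator: if `A` generates a decaying bounded analytic semigroup `T_A`, `B` is a
continuous linear bijection with continuous inverse, and `S = B∘A` (with the same
domain) generates a decaying bounded analytic semigroup `T_S`, then for all
`s ∈ (0,1)`, `q ∈ [1,∞]` the norms `‖t^{1−s}‖S(T_S(t)x)‖‖_{L^q(dt/t)}` and
`‖t^{1−s}‖A(T_A(t)x)‖‖_{L^q(dt/t)}` are equivalent, uniformly in `x ∈ D(A)`. -/
theorem equiv_norms_positive_regularity
    (DA : Set X) (A : X → X) (B : X ≃L[ℝ] X)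
    (TA TS : ℝ → X →L[ℝ] X) (MA CA MS CS : ℝ)
    (hA : IsBAS DA A TA MA CA)
    (hAdecay : ∀ x : X, Filter.Tendsto (fun t => ‖TA t x‖) Filter.atTop (nhds 0))
    (hS : IsBAS DA (fun x => B (A x)) TS MS CS)
    (hSdecay : ∀ x : X, Filter.Tendsto (fun t => ‖TS t x‖) Filter.atTop (nhds 0))
    (s : ℝ) (hs0 : 0 < s) (hs1 : s < 1) (q : ℝ≥0∞) (hq : 1 ≤ q) :
    ∃ c : ℝ, 0 < c ∧ ∃ C : ℝ, 0 < C ∧ ∀ x ∈ DA,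
      ENNReal.ofReal c *
          eLpNorm (fun t : ℝ => t ^ (1 - s) * ‖A (TA t x)‖) q mulHaar
        ≤ eLpNorm (fun t : ℝ => t ^ (1 - s) * ‖B (A (TS t x))‖) q mulHaar ∧
      eLpNorm (fun t : ℝ => t ^ (1 - s) * ‖B (A (TS t x))‖) q mulHaar
        ≤ ENNReal.ofReal C *
            eLpNorm (fun t : ℝ => t ^ (1 - s) * ‖A (TA t x)‖) q mulHaar := by
  obtain ⟨C, hC, hle⟩ := hA.eLpNorm_generator_le hS (norm_nonneg (B : X →L[ℝ] X))
    (fun y _ => (B : X →L[ℝ] X).le_opNorm (A y)) hs0 hq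
  obtain ⟨C', hC', hle'⟩ := hS.eLpNorm_generator_le hA (norm_nonneg (B.symm : X →L[ℝ] X))
    (fun y _ => by simpa using (B.symm : X →L[ℝ] X).le_opNorm (B (A y))) hs0 hq
  refine ⟨C'⁻¹, inv_pos.2 hC', C, hC, fun x hx => ⟨?_, hle x hx⟩⟩
  refine (mul_le_mul_right (hle' x hx) _).trans_eq ?_
  rw [← mul_assoc, ← ENNReal.ofReal_mul (inv_pos.2 hC').le, inv_mul_cancel₀ hC'.ne',
    ENNReal.ofReal_one, one_mul]
end
end
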